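/- Let m ≥ 3 be an integer with an odd factor and let (e_1,…,e_m) be an optimal edge family of size m. Then there exist a constant c > 0, an angle φ ∈ ℝ, a permutation σ of {1,…,m}, and signs ε = (ε_1,…,ε_m) ∈ {±1}^m with ∑_{j=1}^m ε_j·e^{ijπ/m} = 0, such that e_{σ(j)} = c·ε_j·(cos(φ + jπ/m), sin(φ + jπ/m)) for every j = 1,…,m. In particular every optimal edge family is equilateral: all ‖e_j‖₂ are equal. -/

import Mathlib

noncomputable section

open Real
open scoped RealInnerProductSpace ENNReal

/-- ℝ² as a Euclidean space. -/
abbrev E2 : Type := EuclideanSpace ℝ (Fin 2)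

/-- The vector `(x, y)` in ℝ². -/
def vec2 (x y : ℝ) : E2 := (WithLp.equiv 2 (Fin 2 → ℝ)).symm ![x, y]

/-- The coordinates of a vector in ℝ². -/
def toFun2 (v : E2) : Fin 2 → ℝ := WithLp.equiv 2 (Fin 2 → ℝ) v

/-- The phaseless measurement map `Φ_A(x) = (|⟨a_j, x⟩|)_j`. -/
def PhiMap {m : ℕ} (a : Fin m → E2) (x : E2) : EuclideanSpace ℝ (Fin m) :=
  (WithLp.equiv 2 (Fin m → ℝ)).symm fun j => |⟪a j, x⟫|

/-- The distance `dist(x,y) = min ‖x − y‖ ‖x + y‖` (real phase retrieval distance). -/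
def pdist (x y : E2) : ℝ := min ‖x - y‖ ‖x + y‖

/-- The set of Lipschitz ratios of the phaseless measurement map. -/
def ratioSet {m : ℕ} (a : Fin m → E2) : Set ℝ :=
  {r | ∃ x y : E2, pdist x y ≠ 0 ∧ r = ‖PhiMap a x - PhiMap a y‖ / pdist x y}

/-- The optimal lower Lipschitz constant `L_A`. -/
def lipL {m : ℕ} (a : Fin m → E2) : ℝ := sInf (ratioSet a)

/-- The optimal upper Lipschitz constant `U_A`. -/
def lipU {m : ℕ} (a : Fin m → E2) : ℝ := sSup (ratioSet a)

/-- The condition number `β_A = U_A / L_A`, with `β_A = +∞` when `L_A = 0`. -/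
def condNum {m : ℕ} (a : Fin m → E2) : ℝ≥0∞ :=
  if lipL a = 0 then ⊤ else ENNReal.ofReal (lipU a / lipL a)

/-- An edge family: nonzero vectors with pairwise distinct directions summing to zero
(the edge vectors of a strictly convex polygon). -/
def IsEdgeFamily {m : ℕ} (e : Fin m → E2) : Prop :=
  (∀ j, e j ≠ 0) ∧
  (∀ i j : Fin m, i ≠ j → ‖e i‖⁻¹ • e i ≠ ‖e j‖⁻¹ • e j) ∧
  ∑ j, e j = 0

/-- The diameter-to-perimeter ratio of the polygon with edge vectors `e`. -/
def rRatio {m : ℕ} (e : Fin m → E2) : ℝ :=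
  sSup {s | ∃ u : E2, ‖u‖ = 1 ∧ s = ∑ j, |⟪e j, u⟫|} / (2 * ∑ j, ‖e j‖)

/-- An optimal edge family: minimizes `rRatio` among all edge families of size `m`. -/
def IsOptimalEdgeFamily {m : ℕ} (e : Fin m → E2) : Prop :=
  IsEdgeFamily e ∧ ∀ e' : Fin m → E2, IsEdgeFamily e' → rRatio e ≤ rRatio e'

/-- The complex square map on ℝ² ≅ ℂ: `f(t·(cos φ, sin φ)) = t²·(cos 2φ, sin 2φ)`. -/
def csq (v : E2) : E2 :=
  vec2 (toFun2 v 0 ^ 2 - toFun2 v 1 ^ 2) (2 * toFun2 v 0 * toFun2 v 1)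

/-- The harmonic frame `E_m`: the `j`-th row is `(cos((j−1)π/m), sin((j−1)π/m))`, `j = 1,…,m`. -/
def harmonicFrame (m : ℕ) : Fin m → E2 :=
  fun j => vec2 (Real.cos ((j : ℕ) * π / m)) (Real.sin ((j : ℕ) * π / m))

/-!
The vectors `±2 e_j`, sorted by angle, are the sides of a centrally symmetric `2m`-gon, the zonogon
`∑ j, [-e_j, e_j]`. Its circumradius `D` is twice the diameter of the original polygon, and its
perimeter is four times the original one. Summation by parts writes half the perimeter of the
zonogon as a sum of projections of its vertices onto the chords joining consecutive edge
directions, whose lengths are `2 sin` of half the angular gaps; so half the perimeter is at most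
`2 D` times a sum of sines of numbers adding up to `π / 2`. By Jensen's inequality for `sin` the
ratio is at least `1 / (2 m sin (π / (2 m)))`, and equality forces equal gaps and the vertices of a
regular `2m`-gon.

When `m = n k` with `k > 1` odd the bound is attained: the signs `(-1) ^ (j / n)` make the
unit vectors at angles `j π / m` sum to zero, since `-e^{iπ/k}` is a `k`-th root of unity other
than `1`.
-/

section Zonogon

variable {m : ℕ} {E : Type*} [AddCommGroup E]

/-- The point `∑ j, ± v j` with sign `+` exactly for `j < k`. If the `v j` are planar and sorted by
angle, these are consecutive vertices of the zonogon `∑ j, [-v j, v j]`. -/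
def zonogonVertex (v : Fin m → E) (k : ℕ) : E :=
  ∑ j : Fin m, if (j : ℕ) < k then v j else -v j

lemma zonogonVertex_last (v : Fin m → E) : zonogonVertex v m = -zonogonVertex v 0 := by
  simp [zonogonVertex]

lemma zonogonVertex_succ_sub (v : Fin m → E) (i : Fin m) :
    zonogonVertex v (i + 1) - zonogonVertex v i = 2 • v i := by
  rw [zonogonVertex, zonogonVertex, ← Finset.sum_sub_distrib, Finset.sum_eq_single i]
  · simp [two_nsmul]
  · intro j _ hj
    have hlt : (j : ℕ) < i + 1 ↔ (j : ℕ) < i := by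
      have := Fin.val_ne_of_ne hj
      omega
    simp only [hlt, sub_self]
  · simp

end Zonogon

section InnerProductSpace

variable {ι E : Type*} [Fintype ι] [NormedAddCommGroup E] [InnerProductSpace ℝ E]

lemma eq_smul_of_norm_le_of_le_inner {x n : E} {D : ℝ} (hn : ‖n‖ = 1) (hx : ‖x‖ ≤ D)
    (h : D ≤ ⟪x, n⟫) : x = D • n := by
  have hD : 0 ≤ D := (norm_nonneg x).trans hx
  have hsq : ‖x - D • n‖ ^ 2 ≤ 0 := calc
    ‖x - D • n‖ ^ 2 = ‖x‖ ^ 2 - 2 * (D * ⟪x, n⟫) + D ^ 2 := by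
      rw [norm_sub_sq_real, real_inner_smul_right, norm_smul, hn, mul_one, Real.norm_eq_abs, sq_abs]
    _ ≤ 0 := by nlinarith [norm_nonneg x]
  exact sub_eq_zero.1 (norm_eq_zero.1 (pow_eq_zero_iff two_ne_zero |>.1
    (le_antisymm hsq (sq_nonneg _))))

lemma sum_inner_sub_eq_sum_inner_sub {m : ℕ} {x n : ℕ → E} (hx : x m = -x 0) (hn : n m = -n 0) :
    ∑ k ∈ Finset.range m, ⟪x (k + 1) - x k, n k⟫ =
      ∑ k ∈ Finset.range m, ⟪x (k + 1), n k - n (k + 1)⟫ := by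
  have htel := Finset.sum_range_sub (fun k => ⟪x k, n k⟫) m
  rw [hx, hn, inner_neg_neg, sub_self] at htel
  rw [← sub_eq_zero, ← Finset.sum_sub_distrib, ← htel]
  refine Finset.sum_congr rfl fun k _ => ?_
  rw [inner_sub_left, inner_sub_right]
  ring

/-- The supremum over unit vectors `u` of `∑ j, |⟪v j, u⟫|`: the circumradius of the zonotope
`∑ j, [-v j, v j]`. If the `v j` are the edges of a convex polygon, it is twice the diameter. -/
def zonotopeRadius (v : ι → E) : ℝ :=
  sSup {s | ∃ u : E, ‖u‖ = 1 ∧ s = ∑ j, |⟪v j, u⟫|}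

lemma sum_abs_inner_le_zonotopeRadius (v : ι → E) {u : E} (hu : ‖u‖ = 1) :
    ∑ j, |⟪v j, u⟫| ≤ zonotopeRadius v := by
  refine le_csSup ⟨∑ j, ‖v j‖, ?_⟩ ⟨u, hu, rfl⟩
  rintro s ⟨w, hw, rfl⟩
  refine Finset.sum_le_sum fun j _ => ?_
  simpa only [hw, mul_one] using abs_real_inner_le_norm (v j) w

lemma zonotopeRadius_nonneg (v : ι → E) : 0 ≤ zonotopeRadius v :=
  Real.sSup_nonneg fun _ ⟨_, _, hs⟩ => hs ▸ Finset.sum_nonneg fun _ _ => abs_nonneg _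

lemma norm_le_zonotopeRadius {v : ι → E} {x : E}
    (hx : ∀ u, ⟪x, u⟫ ≤ ∑ j, |⟪v j, u⟫|) : ‖x‖ ≤ zonotopeRadius v := by
  rcases eq_or_ne x 0 with rfl | hx0
  · simpa only [norm_zero] using zonotopeRadius_nonneg v
  · calc
      ‖x‖ = ⟪x, ‖x‖⁻¹ • x⟫ := by
        rw [real_inner_smul_right, real_inner_self_eq_norm_sq, sq,
          inv_mul_cancel_left₀ (norm_ne_zero_iff.2 hx0)]
      _ ≤ ∑ j, |⟪v j, ‖x‖⁻¹ • x⟫| := hx _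
      _ ≤ zonotopeRadius v := sum_abs_inner_le_zonotopeRadius v (norm_smul_inv_norm hx0)

lemma norm_apply_le_zonotopeRadius (v : ι → E) (i : ι) : ‖v i‖ ≤ zonotopeRadius v :=
  norm_le_zonotopeRadius fun u => (le_abs_self _).trans
    (Finset.single_le_sum (f := fun j => |⟪v j, u⟫|) (fun _ _ => abs_nonneg _) (Finset.mem_univ i))

lemma zonotopeRadius_smul_comp_perm (v : ι → E) (σ : Equiv.Perm ι) {ε : ι → ℝ}
    (hε : ∀ j, |ε j| = 1) : zonotopeRadius (fun j => ε j • v (σ j)) = zonotopeRadius v := by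
  have hsum (u : E) : ∑ j, |⟪ε j • v (σ j), u⟫| = ∑ j, |⟪v j, u⟫| := by
    simp only [real_inner_smul_left, abs_mul, hε, one_mul]
    exact Equiv.sum_comp σ fun j => |⟪v j, u⟫|
  simp only [zonotopeRadius, hsum]

lemma norm_zonogonVertex_le {m : ℕ} (v : Fin m → E) (k : ℕ) :
    ‖zonogonVertex v k‖ ≤ zonotopeRadius v := by
  refine norm_le_zonotopeRadius fun u => ?_
  rw [zonogonVertex, sum_inner]
  refine Finset.sum_le_sum fun j _ => ?_
  split_ifs
  · exact le_abs_self _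
  · simpa only [inner_neg_left] using neg_le_abs _

end InnerProductSpace

section Sine

lemma sum_sin_le_card_mul_sin {ι : Type*} {s : Finset ι} {x : ι → ℝ} (hs : s.Nonempty)
    (hx : ∀ i ∈ s, x i ∈ Set.Icc 0 π) :
    ∑ i ∈ s, Real.sin (x i) ≤ s.card * Real.sin ((∑ i ∈ s, x i) / s.card) := by
  have hcard : (0 : ℝ) < s.card := by exact_mod_cast hs.card_pos
  have hjensen := strictConcaveOn_sin_Icc.concaveOn.le_map_sum (w := fun _ => (s.card : ℝ)⁻¹)
    (fun _ _ => by positivity) (by simp [hcard.ne']) hx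
  simp only [smul_eq_mul, ← Finset.mul_sum] at hjensen
  rwa [inv_mul_le_iff₀ hcard, inv_mul_eq_div] at hjensen

lemma eq_average_of_card_mul_sin_le_sum_sin {ι : Type*} {s : Finset ι} {x : ι → ℝ}
    (hx : ∀ i ∈ s, x i ∈ Set.Icc 0 π)
    (h : s.card * Real.sin ((∑ i ∈ s, x i) / s.card) ≤ ∑ i ∈ s, Real.sin (x i)) :
    ∀ i ∈ s, x i = (∑ j ∈ s, x j) / s.card := by
  intro i hi
  have hs : s.Nonempty := ⟨i, hi⟩
  have hcard : (0 : ℝ) < s.card := by exact_mod_cast hs.card_pos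
  have hjensen := strictConcaveOn_sin_Icc.map_sum_eq_iff (w := fun _ => (s.card : ℝ)⁻¹)
    (fun _ _ => by positivity) (by simp [hcard.ne']) hx
  simp only [smul_eq_mul, ← Finset.mul_sum] at hjensen
  simp only [inv_mul_eq_div] at hjensen
  refine hjensen.1 ((eq_div_iff hcard.ne').2 ?_) i hi
  rw [mul_comm]
  exact h.antisymm (sum_sin_le_card_mul_sin hs hx)

lemma sin_pi_div_two_mul_pos (m : ℕ) [NeZero m] : 0 < Real.sin (π / (2 * m)) := by
  have hm : (1 : ℝ) ≤ m := by exact_mod_cast NeZero.one_le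
  refine Real.sin_pos_of_pos_of_lt_pi (by positivity) ?_
  rw [div_lt_iff₀ (by positivity)]
  nlinarith [Real.pi_pos]

end Sine

section Dir

/-- The unit vector at angle `θ`. -/
def dir (θ : ℝ) : E2 := vec2 (Real.cos θ) (Real.sin θ)

lemma orthonormalBasisOneI_repr_exp (θ : ℝ) :
    Complex.orthonormalBasisOneI.repr (Complex.exp (θ * Complex.I)) = dir θ := by
  ext i
  fin_cases i <;> simp [dir, vec2, Complex.exp_ofReal_mul_I_re, Complex.exp_ofReal_mul_I_im]

lemma norm_dir (θ : ℝ) : ‖dir θ‖ = 1 := by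
  rw [← orthonormalBasisOneI_repr_exp, LinearIsometryEquiv.norm_map,
    Complex.norm_exp_ofReal_mul_I]

lemma inner_dir_dir (a b : ℝ) : ⟪dir a, dir b⟫ = Real.cos (a - b) := by
  simp only [dir, vec2, PiLp.inner_apply, Fin.sum_univ_two, Real.cos_sub]
  simp [mul_comm]

lemma dir_add_pi (θ : ℝ) : dir (θ + π) = -dir θ := by
  simp only [← orthonormalBasisOneI_repr_exp, ← map_neg]
  push_cast
  rw [add_mul, Complex.exp_add, Complex.exp_pi_mul_I, mul_neg_one]

lemma dir_sub_pi (θ : ℝ) : dir (θ - π) = -dir θ := by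
  rw [← neg_neg (dir (θ - π)), ← dir_add_pi, sub_add_cancel]

lemma dir_sub_dir (a b : ℝ) :
    dir a - dir b = (2 * Real.sin ((b - a) / 2)) • dir ((a + b - π) / 2) := by
  have hmid : (a + b - π) / 2 = (a + b) / 2 - π / 2 := by ring
  have hneg : (b - a) / 2 = -((a - b) / 2) := by ring
  ext i
  fin_cases i
  · simp [dir, vec2, hmid, hneg, Real.cos_sub_pi_div_two, Real.cos_sub_cos]
    ring
  · simp [dir, vec2, hmid, hneg, Real.sin_sub_pi_div_two, Real.sin_sub_sin]

lemma exists_eq_norm_smul_dir (v : E2) : ∃ θ ∈ Set.Ioc (-π) π, v = ‖v‖ • dir θ := by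
  obtain ⟨z, rfl⟩ := Complex.orthonormalBasisOneI.repr.surjective v
  refine ⟨z.arg, ⟨z.neg_pi_lt_arg, z.arg_le_pi⟩, ?_⟩
  rw [LinearIsometryEquiv.norm_map, ← orthonormalBasisOneI_repr_exp, ← map_smul,
    Complex.real_smul, Complex.norm_mul_exp_arg_mul_I]

lemma exists_sign_angle_mem_Ico (v : E2) :
    ∃ ε θ : ℝ, (ε = 1 ∨ ε = -1) ∧ θ ∈ Set.Ico 0 π ∧ v = (‖v‖ * ε) • dir θ := by
  obtain ⟨θ, ⟨hθ, hθπ⟩, hv⟩ := exists_eq_norm_smul_dir v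
  rcases lt_or_ge θ 0 with hneg | hnonneg
  · refine ⟨-1, θ + π, .inr rfl, ⟨by linarith, by linarith⟩, ?_⟩
    rwa [dir_add_pi, mul_neg_one, neg_smul_neg]
  · rcases hθπ.lt_or_eq with hlt | rfl
    · exact ⟨1, θ, .inl rfl, ⟨hnonneg, hlt⟩, by rwa [mul_one]⟩
    · refine ⟨-1, 0, .inr rfl, ⟨le_rfl, Real.pi_pos⟩, ?_⟩
      rwa [← zero_add π, dir_add_pi, smul_neg, ← neg_smul, ← mul_neg_one] at hv

lemma sin_sub_eq_zero_of_smul_dir_eq {s t a b : ℝ} (hs : s ≠ 0) (h : s • dir a = t • dir b) :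
    Real.sin (a - b) = 0 := by
  have hinner := congrArg (fun v => ⟪v, dir (b + π / 2)⟫) h
  simp only [real_inner_smul_left, inner_dir_dir, ← sub_sub, Real.cos_sub_pi_div_two, sub_self,
    Real.sin_zero, mul_zero] at hinner
  exact (mul_eq_zero.1 hinner).resolve_left hs

lemma sum_smul_dir_add_eq_zero_iff {ι : Type*} {s : Finset ι} {c θ : ι → ℝ} {φ : ℝ} :
    ∑ j ∈ s, c j • dir (φ + θ j) = 0 ↔
      ∑ j ∈ s, (c j : ℂ) * Complex.exp (θ j * Complex.I) = 0 := by
  have hrot : ∑ j ∈ s, c j • dir (φ + θ j) = Complex.orthonormalBasisOneI.repr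
      (Complex.exp (φ * Complex.I) * ∑ j ∈ s, (c j : ℂ) * Complex.exp (θ j * Complex.I)) := by
    rw [Finset.mul_sum, map_sum]
    refine Finset.sum_congr rfl fun j _ => ?_
    rw [← orthonormalBasisOneI_repr_exp, ← map_smul, Complex.real_smul, mul_left_comm,
      ← Complex.exp_add]
    push_cast
    rw [add_mul]
  rw [hrot, LinearIsometryEquiv.map_eq_zero_iff, mul_eq_zero_iff_left (Complex.exp_ne_zero _)]

lemma exp_pi_mul_I_div_pow (m n : ℕ) :
    Complex.exp (π * Complex.I / m) ^ n = Complex.exp ((n * π / m : ℝ) * Complex.I) := by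
  rw [← Complex.exp_nat_mul]
  congr 1
  push_cast
  ring

end Dir

/-- The vertices `V 0, …, V m = -V 0` of one half of a centrally symmetric convex `2m`-gon
contained in the disk of radius `D` about the origin. Its sides are allowed to degenerate to points;
the direction of the `k`-th side is recorded by the angle `α k`, and these angles sweep a half-turn
from `α 0` to `α m`. -/
structure IsHalfPolygon (m : ℕ) (α : ℕ → ℝ) (V : ℕ → E2) (D : ℝ) : Prop where
  monotone : Monotone α
  angle_last : α m = α 0 + π
  vertex_last : V m = -V 0
  edge_eq : ∀ k < m, V (k + 1) - V k = ‖V (k + 1) - V k‖ • dir (α k)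
  norm_le : ∀ k ≤ m, ‖V k‖ ≤ D

namespace IsHalfPolygon

variable {m k : ℕ} {α : ℕ → ℝ} {V : ℕ → E2} {D : ℝ}

lemma neZero (h : IsHalfPolygon m α V D) : NeZero m := by
  refine ⟨?_⟩
  rintro rfl
  linarith [h.angle_last, Real.pi_pos]

lemma half_gap_mem_Icc (h : IsHalfPolygon m α V D) (hk : k < m) :
    (α (k + 1) - α k) / 2 ∈ Set.Icc 0 π := by
  have hstep := h.monotone k.le_succ
  have hfirst := h.monotone k.zero_le
  have hlast := h.monotone (Nat.succ_le_of_lt hk)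
  rw [h.angle_last] at hlast
  constructor <;> linarith [Real.pi_pos]

lemma average_half_gap (h : IsHalfPolygon m α V D) :
    (∑ k ∈ Finset.range m, (α (k + 1) - α k) / 2) / (Finset.range m).card = π / (2 * m) := by
  rw [← Finset.sum_div, Finset.sum_range_sub, h.angle_last, add_sub_cancel_left, Finset.card_range,
    div_div]

lemma sum_norm_edge_eq (h : IsHalfPolygon m α V D) :
    ∑ k ∈ Finset.range m, ‖V (k + 1) - V k‖ =
      ∑ k ∈ Finset.range m, 2 * Real.sin ((α (k + 1) - α k) / 2) *
        ⟪V (k + 1), dir ((α k + α (k + 1) - π) / 2)⟫ := by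
  have hdir : dir (α m) = -dir (α 0) := by rw [h.angle_last, dir_add_pi]
  calc
    _ = ∑ k ∈ Finset.range m, ⟪V (k + 1) - V k, dir (α k)⟫ := by
      refine Finset.sum_congr rfl fun k hk => ?_
      conv_rhs => rw [h.edge_eq k (Finset.mem_range.1 hk), real_inner_smul_left,
        real_inner_self_eq_norm_sq, norm_dir, one_pow, mul_one]
    _ = ∑ k ∈ Finset.range m, ⟪V (k + 1), dir (α k) - dir (α (k + 1))⟫ :=
      sum_inner_sub_eq_sum_inner_sub (n := fun k => dir (α k)) h.vertex_last hdir
    _ = _ := by simp only [dir_sub_dir, real_inner_smul_right]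

lemma inner_vertex_dir_le (h : IsHalfPolygon m α V D) (hk : k ≤ m) (θ : ℝ) :
    ⟪V k, dir θ⟫ ≤ D := calc
  ⟪V k, dir θ⟫ ≤ ‖V k‖ * ‖dir θ‖ := real_inner_le_norm _ _
  _ ≤ D := by simpa only [norm_dir, mul_one] using h.norm_le k hk

lemma sin_half_gap_mul_inner_le (h : IsHalfPolygon m α V D) (hk : k < m) :
    2 * Real.sin ((α (k + 1) - α k) / 2) * ⟪V (k + 1), dir ((α k + α (k + 1) - π) / 2)⟫ ≤
      2 * Real.sin ((α (k + 1) - α k) / 2) * D := by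
  have hsin := Real.sin_nonneg_of_mem_Icc (h.half_gap_mem_Icc hk)
  gcongr
  exact h.inner_vertex_dir_le hk _

lemma sum_norm_edge_le (h : IsHalfPolygon m α V D) :
    ∑ k ∈ Finset.range m, ‖V (k + 1) - V k‖ ≤
      2 * D * ∑ k ∈ Finset.range m, Real.sin ((α (k + 1) - α k) / 2) := by
  rw [h.sum_norm_edge_eq, Finset.mul_sum]
  refine Finset.sum_le_sum fun k hk => ?_
  exact (h.sin_half_gap_mul_inner_le (Finset.mem_range.1 hk)).trans_eq (mul_right_comm _ _ _)

lemma half_gap_eq (h : IsHalfPolygon m α V D) (hD : 0 < D)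
    (hmax : 2 * D * (m * Real.sin (π / (2 * m))) ≤ ∑ k ∈ Finset.range m, ‖V (k + 1) - V k‖)
    (hk : k < m) : (α (k + 1) - α k) / 2 = π / (2 * m) := by
  have hsin : m * Real.sin (π / (2 * m)) ≤
      ∑ k ∈ Finset.range m, Real.sin ((α (k + 1) - α k) / 2) :=
    le_of_mul_le_mul_left (hmax.trans h.sum_norm_edge_le) (by positivity)
  rw [← h.average_half_gap]
  refine eq_average_of_card_mul_sin_le_sum_sin
    (fun i hi => h.half_gap_mem_Icc (Finset.mem_range.1 hi)) ?_ k (Finset.mem_range.2 hk)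
  rwa [h.average_half_gap, Finset.card_range]

lemma angle_eq (h : IsHalfPolygon m α V D) (hD : 0 < D)
    (hmax : 2 * D * (m * Real.sin (π / (2 * m))) ≤ ∑ k ∈ Finset.range m, ‖V (k + 1) - V k‖)
    (hk : k ≤ m) : α k = α 0 + k * π / m := by
  induction k with
  | zero => simp
  | succ k ih =>
    have hgap := h.half_gap_eq hD hmax hk
    have hhalf : π / m = 2 * (π / (2 * m)) := by ring
    push_cast
    rw [add_mul, add_div, one_mul]
    linarith [ih (Nat.le_of_succ_le hk)]

lemma vertex_succ_eq (h : IsHalfPolygon m α V D) (hD : 0 < D)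
    (hmax : 2 * D * (m * Real.sin (π / (2 * m))) ≤ ∑ k ∈ Finset.range m, ‖V (k + 1) - V k‖)
    (hk : k < m) : V (k + 1) = D • dir ((α k + α (k + 1) - π) / 2) := by
  have := h.neZero
  have hle : ∀ i ∈ Finset.range m, _ := fun i hi =>
    h.sin_half_gap_mul_inner_le (Finset.mem_range.1 hi)
  have hsum : ∑ i ∈ Finset.range m, 2 * Real.sin ((α (i + 1) - α i) / 2) * D =
      2 * D * (m * Real.sin (π / (2 * m))) := by
    rw [Finset.sum_congr rfl fun i hi => by rw [h.half_gap_eq hD hmax (Finset.mem_range.1 hi)],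
      Finset.sum_const, Finset.card_range, nsmul_eq_mul]
    ring
  have heq := (Finset.sum_eq_sum_iff_of_le hle).1
    ((Finset.sum_le_sum hle).antisymm (by rwa [← h.sum_norm_edge_eq, hsum]))
    k (Finset.mem_range.2 hk)
  rw [h.half_gap_eq hD hmax hk] at heq
  exact eq_smul_of_norm_le_of_le_inner (norm_dir _) (h.norm_le _ hk)
    (mul_left_cancel₀ (mul_pos two_pos (sin_pi_div_two_mul_pos m)).ne' heq).ge

lemma vertex_eq (h : IsHalfPolygon m α V D) (hD : 0 < D)
    (hmax : 2 * D * (m * Real.sin (π / (2 * m))) ≤ ∑ k ∈ Finset.range m, ‖V (k + 1) - V k‖)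
    (hk : k ≤ m) : V k = D • dir (α 0 - π / 2 + (2 * k - 1) * π / (2 * m)) := by
  have := h.neZero
  have hm : (m : ℝ) ≠ 0 := NeZero.ne _
  have hsucc (i : ℕ) (hi : i < m) :
      V (i + 1) = D • dir (α 0 - π / 2 + (2 * (i + 1 : ℕ) - 1) * π / (2 * m)) := by
    rw [h.vertex_succ_eq hD hmax hi, h.angle_eq hD hmax hi, h.angle_eq hD hmax hi.le]
    congr 2
    push_cast
    ring
  cases k with
  | zero =>
    have hlast := hsucc (m - 1) (Nat.sub_one_lt (NeZero.ne m))
    rw [Nat.sub_one_add_one (NeZero.ne m), h.vertex_last, neg_eq_iff_eq_neg, ← smul_neg,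
      ← dir_sub_pi] at hlast
    rw [hlast]
    congr 2
    push_cast
    field_simp
    ring
  | succ k => exact hsucc k hk

lemma norm_edge_eq (h : IsHalfPolygon m α V D) (hD : 0 < D)
    (hmax : 2 * D * (m * Real.sin (π / (2 * m))) ≤ ∑ k ∈ Finset.range m, ‖V (k + 1) - V k‖)
    (hk : k < m) : ‖V (k + 1) - V k‖ = 2 * D * Real.sin (π / (2 * m)) := by
  have := h.neZero
  have hsin := sin_pi_div_two_mul_pos m
  rw [h.vertex_eq hD hmax hk, h.vertex_eq hD hmax hk.le, norm_sub_rev, ← smul_sub, dir_sub_dir,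
    norm_smul, norm_smul, norm_dir]
  have hangle : (α 0 - π / 2 + (2 * (k + 1 : ℕ) - 1) * π / (2 * m) -
      (α 0 - π / 2 + (2 * k - 1) * π / (2 * m))) / 2 = π / (2 * m) := by
    push_cast
    ring
  rw [hangle, Real.norm_of_nonneg hD.le, Real.norm_of_nonneg (by positivity)]
  ring

end IsHalfPolygon

section Rigidity

lemma exists_monotone_nat_extension {m : ℕ} [NeZero m] {b : Fin m → ℝ} {c : ℝ} (hb : Monotone b)
    (hbc : ∀ j, b j ≤ b 0 + c) :
    ∃ α : ℕ → ℝ, Monotone α ∧ α m = α 0 + c ∧ ∀ j : Fin m, α j = b j := by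
  refine ⟨fun k => if h : k < m then b ⟨k, h⟩ else b 0 + c, ?_, ?_, fun j => by simp⟩
  · intro k l hkl
    by_cases hl : l < m
    · simpa only [hl, hkl.trans_lt hl, dite_true] using hb (Fin.mk_le_mk.2 hkl)
    · by_cases hk : k < m
      · simpa only [hk, hl, dite_true, dite_false] using hbc _
      · simp only [hk, hl, dite_false, le_refl]
  · simp only [lt_irrefl, dite_false, NeZero.pos m, dite_true]
    rfl

lemma exists_perm_sorted_angles {m : ℕ} [NeZero m] (e : Fin m → E2) :
    ∃ (σ : Equiv.Perm (Fin m)) (ε : Fin m → ℝ) (α : ℕ → ℝ), (∀ j, ε j = 1 ∨ ε j = -1) ∧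
      Monotone α ∧ α m = α 0 + π ∧ ∀ j : Fin m, e (σ j) = (‖e (σ j)‖ * ε j) • dir (α j) := by
  choose ε θ hε hθ he using fun j => exists_sign_angle_mem_Ico (e j)
  obtain ⟨α, hmono, hlast, hα⟩ := exists_monotone_nat_extension (c := π)
    (Tuple.monotone_sort θ) fun j => by
      simp only [Function.comp_apply]
      linarith [(hθ (Tuple.sort θ j)).2, (hθ (Tuple.sort θ 0)).1]
  exact ⟨Tuple.sort θ, fun j => ε (Tuple.sort θ j), α, fun j => hε _, hmono, hlast, fun j => by
    rw [hα]; exact he _⟩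

lemma isHalfPolygon_zonogonVertex {m : ℕ} {ℓ : Fin m → ℝ} {α : ℕ → ℝ} (hℓ : ∀ j, 0 ≤ ℓ j)
    (hmono : Monotone α) (hlast : α m = α 0 + π) :
    IsHalfPolygon m α (zonogonVertex fun j : Fin m => ℓ j • dir (α j))
      (zonotopeRadius fun j : Fin m => ℓ j • dir (α j)) where
  monotone := hmono
  angle_last := hlast
  vertex_last := zonogonVertex_last _
  edge_eq k hk := by
    have hedge := zonogonVertex_succ_sub (fun j : Fin m => ℓ j • dir (α j)) ⟨k, hk⟩
    simp only [← Nat.cast_smul_eq_nsmul ℝ, smul_smul] at hedge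
    rw [hedge, norm_smul, norm_dir, mul_one, Real.norm_of_nonneg (by simpa using hℓ _)]
  norm_le k _ := norm_zonogonVertex_le _ k

lemma exists_perm_sign_smul_dir_of_le_sum_norm {m : ℕ} [NeZero m] {e : Fin m → E2} (he : e ≠ 0)
    (hmax : zonotopeRadius e * (m * Real.sin (π / (2 * m))) ≤ ∑ j, ‖e j‖) :
    ∃ c : ℝ, 0 < c ∧ ∃ φ : ℝ, ∃ σ : Equiv.Perm (Fin m), ∃ ε : Fin m → ℝ,
      (∀ j, ε j = 1 ∨ ε j = -1) ∧
      ∀ j : Fin m, e (σ j) = (c * ε j) • dir (φ + ((j : ℕ) + 1) * π / m) := by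
  obtain ⟨σ, ε, α, hε, hmono, hlast, hσ⟩ := exists_perm_sorted_angles e
  have hεabs (j) : |ε j| = 1 := (hε j).elim (by simp [·]) (by simp [·])
  set v : Fin m → E2 := fun j => ‖e (σ j)‖ • dir (α j) with hv
  have hve : v = fun j => ε j • e (σ j) := by
    funext j
    have hεsq : ε j * ε j = 1 := by rw [← abs_mul_abs_self, hεabs, one_mul]
    rw [hσ j, smul_smul, mul_left_comm, hεsq, mul_one]
  have hradius : zonotopeRadius v = zonotopeRadius e := by
    rw [hve, zonotopeRadius_smul_comp_perm e σ hεabs]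
  have hpos : 0 < zonotopeRadius e := by
    obtain ⟨i, hi⟩ := Function.ne_iff.1 he
    exact (norm_pos_iff.2 hi).trans_le (norm_apply_le_zonotopeRadius e i)
  have hpoly : IsHalfPolygon m α (zonogonVertex v) (zonotopeRadius e) :=
    hradius ▸ isHalfPolygon_zonogonVertex (fun j => norm_nonneg (e (σ j))) hmono hlast
  have hedge (j : Fin m) : ‖zonogonVertex v (j + 1) - zonogonVertex v j‖ = 2 * ‖e (σ j)‖ := by
    rw [zonogonVertex_succ_sub, ← Nat.cast_smul_eq_nsmul ℝ, norm_smul, hv, norm_smul, norm_dir]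
    simp
  have hperimeter : 2 * zonotopeRadius e * (m * Real.sin (π / (2 * m))) ≤
      ∑ k ∈ Finset.range m, ‖zonogonVertex v (k + 1) - zonogonVertex v k‖ := by
    rw [Finset.sum_range]
    simp only [hedge, ← Finset.mul_sum]
    rw [Equiv.sum_comp σ fun j => ‖e j‖, mul_assoc]
    gcongr
  refine ⟨zonotopeRadius e * Real.sin (π / (2 * m)), mul_pos hpos (sin_pi_div_two_mul_pos m),
    α 0 - π / m, σ, ε, hε, fun j => ?_⟩
  have hlen : ‖e (σ j)‖ = zonotopeRadius e * Real.sin (π / (2 * m)) := by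
    linarith [hpoly.norm_edge_eq hpos hperimeter j.2, hedge j]
  have hangle : α j = α 0 - π / m + ((j : ℕ) + 1) * π / m := by
    rw [hpoly.angle_eq hpos hperimeter j.2.le]
    ring
  rw [hσ j, hlen, hangle]

end Rigidity

section Comparison

lemma sum_range_mul_neg_one_pow_div_mul_pow {R : Type*} [CommRing R] (ω : R) (n k : ℕ) :
    ∑ j ∈ Finset.range (n * k), (-1) ^ (j / n) * ω ^ j =
      (∑ t ∈ Finset.range k, (-ω ^ n) ^ t) * ∑ i ∈ Finset.range n, ω ^ i := by
  induction k with
  | zero => simp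
  | succ k ih =>
    rw [Nat.mul_succ, Finset.sum_range_add, ih, Finset.sum_range_succ, add_mul]
    congr 1
    rw [Finset.mul_sum]
    refine Finset.sum_congr rfl fun i hi => ?_
    have hi := Finset.mem_range.1 hi
    rw [Nat.mul_add_div (i.zero_le.trans_lt hi), Nat.div_eq_of_lt hi, add_zero, pow_add, pow_mul,
      neg_pow (ω ^ n), mul_assoc]

lemma sum_neg_one_pow_div_mul_pow_eq_zero {R : Type*} [CommRing R] [IsDomain R] {ω : R} {n k : ℕ}
    (hk : Odd k) (hω : ω ^ (n * k) = -1) (hn : ω ^ n ≠ -1) :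
    ∑ j ∈ Finset.range (n * k), (-1) ^ (j / n) * ω ^ j = 0 := by
  have hroot : (-ω ^ n) ^ k = 1 := by rw [hk.neg_pow, ← pow_mul, hω, neg_neg]
  have hgeom : (∑ t ∈ Finset.range k, (-ω ^ n) ^ t) * (-ω ^ n - 1) = 0 := by
    rw [geom_sum_mul, hroot, sub_self]
  have hne : -ω ^ n - 1 ≠ 0 := fun h => hn (by linear_combination -h)
  rw [sum_range_mul_neg_one_pow_div_mul_pow, (mul_eq_zero.1 hgeom).resolve_right hne, zero_mul]

lemma exists_signs_sum_smul_harmonicFrame_eq_zero {m : ℕ} [NeZero m]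
    (hodd : ∃ k, Odd k ∧ 1 < k ∧ k ∣ m) :
    ∃ ε : Fin m → ℝ, (∀ j, |ε j| = 1) ∧ ∑ j, ε j • harmonicFrame m j = 0 := by
  obtain ⟨k, hk, hk1, n, hkn⟩ := hodd
  have hm : (m : ℝ) ≠ 0 := NeZero.ne _
  have hn : 0 < n := Nat.pos_of_ne_zero fun h => NeZero.ne m (by rw [hkn, h, mul_zero])
  have hlt : (n : ℝ) * π / m < π := by
    have : (n : ℝ) < m := by exact_mod_cast hkn ▸ lt_mul_of_one_lt_left hn hk1
    rw [div_lt_iff₀ (by positivity), mul_comm]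
    gcongr
  have hpow : Complex.exp (π * Complex.I / m) ^ (n * k) = -1 := by
    rw [mul_comm n k, ← hkn, exp_pi_mul_I_div_pow, mul_div_cancel_left₀ _ hm, Complex.exp_pi_mul_I]
  have hne : Complex.exp (π * Complex.I / m) ^ n ≠ -1 := by
    intro h
    have him := congrArg Complex.im h
    rw [exp_pi_mul_I_div_pow, Complex.exp_ofReal_mul_I_im, Complex.neg_im, Complex.one_im,
      neg_zero] at him
    exact (Real.sin_pos_of_pos_of_lt_pi (by positivity) hlt).ne' him
  refine ⟨fun j => (-1) ^ ((j : ℕ) / n), fun j => by simp, ?_⟩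
  have hsum := sum_neg_one_pow_div_mul_pow_eq_zero hk hpow hne
  rw [mul_comm n k, ← hkn, Finset.sum_range] at hsum
  have := (sum_smul_dir_add_eq_zero_iff (φ := 0) (s := Finset.univ)
    (c := fun j : Fin m => (-1) ^ ((j : ℕ) / n)) (θ := fun j : Fin m => (j : ℕ) * π / m)).2
    (by simpa only [Complex.ofReal_pow, Complex.ofReal_neg, Complex.ofReal_one,
      exp_pi_mul_I_div_pow] using hsum)
  simp only [zero_add] at this
  exact this

lemma isEdgeFamily_smul_harmonicFrame {m : ℕ} {ε : Fin m → ℝ} (hε : ∀ j, |ε j| = 1)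
    (hsum : ∑ j, ε j • harmonicFrame m j = 0) :
    IsEdgeFamily fun j => ε j • harmonicFrame m j := by
  have hnorm (j) : ‖ε j • harmonicFrame m j‖ = 1 := by
    rw [norm_smul, Real.norm_eq_abs, hε, one_mul]
    exact norm_dir _
  refine ⟨fun j => norm_ne_zero_iff.1 (by simp [hnorm]), fun i j hij h => hij ?_, hsum⟩
  simp only [hnorm, inv_one, one_smul] at h
  have hm : (0 : ℝ) < m := by exact_mod_cast i.pos
  have hsin := sin_sub_eq_zero_of_smul_dir_eq (abs_ne_zero.1 (by simp [hε])) h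
  have hi : ((i : ℕ) : ℝ) < m := by exact_mod_cast i.2
  have hj : ((j : ℕ) : ℝ) < m := by exact_mod_cast j.2
  have hangle : ((i : ℕ) : ℝ) * π / m - (j : ℕ) * π / m = (((i : ℕ) - (j : ℕ)) / m) * π := by ring
  have hquot : |(((i : ℕ) : ℝ) - (j : ℕ)) / m| < 1 := by
    rw [abs_div, Nat.abs_cast, div_lt_one hm, abs_sub_lt_iff]
    constructor <;> linarith [(i : ℕ).cast_nonneg (α := ℝ), (j : ℕ).cast_nonneg (α := ℝ)]
  rw [abs_lt] at hquot
  rw [hangle, Real.sin_eq_zero_iff_of_lt_of_lt (by nlinarith [Real.pi_pos])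
    (by nlinarith [Real.pi_pos]), mul_eq_zero, or_iff_left Real.pi_ne_zero, div_eq_zero_iff,
    or_iff_left hm.ne', sub_eq_zero] at hsin
  exact Fin.ext (by exact_mod_cast hsin)

lemma sum_cos_sub_mul_mul_two_sin (n : ℕ) (x δ : ℝ) :
    (∑ j ∈ Finset.range n, Real.cos (x - j * δ)) * (2 * Real.sin (δ / 2)) =
      Real.sin (x + δ / 2) - Real.sin (x + δ / 2 - n * δ) := by
  rw [Finset.sum_mul]
  have hterm (j : ℕ) : Real.cos (x - j * δ) * (2 * Real.sin (δ / 2)) =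
      Real.sin (x + δ / 2 - j * δ) - Real.sin (x + δ / 2 - (j + 1 : ℕ) * δ) := by
    rw [Real.sin_sub_sin]
    push_cast
    ring_nf
  simp only [hterm]
  simpa using Finset.sum_range_sub' (fun j : ℕ => Real.sin (x + δ / 2 - j * δ)) n

lemma periodic_sum_sub_mul_div {f : ℝ → ℝ} {c : ℝ} (hf : Function.Periodic f c) (m : ℕ)
    [NeZero m] :
    Function.Periodic (fun x => ∑ j ∈ Finset.range m, f (x - j * (c / m))) (c / m) := by
  intro x
  have hm : (m : ℝ) ≠ 0 := NeZero.ne _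
  have hshift (j : ℕ) : f (x - j * (c / m)) = f (x + c / m - (j + 1 : ℕ) * (c / m)) := by
    congr 1
    push_cast
    ring
  have hwrap : f (x + c / m - m * (c / m)) = f (x + c / m - (0 : ℕ) * (c / m)) := by
    rw [mul_div_cancel₀ _ hm, hf.sub_eq, Nat.cast_zero, zero_mul, sub_zero]
  simp only [hshift]
  have hsplit := Finset.sum_range_succ' (fun j : ℕ => f (x + c / m - j * (c / m))) m
  rw [Finset.sum_range_succ, hwrap] at hsplit
  exact add_right_cancel hsplit

lemma sum_abs_cos_sub_mul_pi_div_le (m : ℕ) [NeZero m] (x : ℝ) :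
    ∑ j ∈ Finset.range m, |Real.cos (x - j * (π / m))| ≤ 1 / Real.sin (π / (2 * m)) := by
  have hm : (0 : ℝ) < m := by exact_mod_cast NeZero.pos m
  have hper : Function.Periodic (fun x => |Real.cos x|) π := fun x => by
    simp only [Real.cos_add_pi, abs_neg]
  obtain ⟨y, ⟨hy, hy'⟩, hxy⟩ := (periodic_sum_sub_mul_div hper m).exists_mem_Ico
    (by positivity) x (π / 2 - π / m)
  have hcos (j) (hj : j ∈ Finset.range m) : 0 ≤ Real.cos (y - j * (π / m)) := by
    have hj : (j : ℝ) + 1 ≤ m := by exact_mod_cast Finset.mem_range.1 hj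
    have hlast : ((j : ℝ) + 1) * (π / m) ≤ π := calc
      ((j : ℝ) + 1) * (π / m) ≤ m * (π / m) := by gcongr
      _ = π := mul_div_cancel₀ _ hm.ne'
    have hfirst : 0 ≤ (j : ℝ) * (π / m) := by positivity
    exact Real.cos_nonneg_of_neg_pi_div_two_le_of_le (by linarith) (by linarith)
  have hsum := sum_cos_sub_mul_mul_two_sin m y (π / m)
  rw [mul_div_cancel₀ _ hm.ne', Real.sin_sub_pi, div_div, mul_comm (m : ℝ) 2] at hsum
  rw [hxy, Finset.sum_congr rfl fun j hj => abs_of_nonneg (hcos j hj),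
    le_div_iff₀ (sin_pi_div_two_mul_pos m)]
  linarith [Real.sin_le_one (y + π / (2 * m))]

lemma zonotopeRadius_smul_harmonicFrame_le {m : ℕ} [NeZero m] {ε : Fin m → ℝ}
    (hε : ∀ j, |ε j| = 1) :
    zonotopeRadius (fun j => ε j • harmonicFrame m j) ≤ 1 / Real.sin (π / (2 * m)) := by
  refine Real.sSup_le ?_ (one_div_pos.2 (sin_pi_div_two_mul_pos m)).le
  rintro s ⟨u, hu, rfl⟩
  obtain ⟨x, -, hx⟩ := exists_eq_norm_smul_dir u
  rw [hu, one_smul] at hx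
  refine le_of_eq_of_le ?_ (sum_abs_cos_sub_mul_pi_div_le m x)
  rw [Finset.sum_range]
  refine Finset.sum_congr rfl fun j _ => ?_
  have hinner : ⟪harmonicFrame m j, dir x⟫ = Real.cos ((j : ℕ) * π / m - x) := inner_dir_dir _ _
  rw [hx, real_inner_smul_left, abs_mul, hε, one_mul, hinner, ← Real.cos_neg, neg_sub,
    mul_div_assoc]

lemma exists_isEdgeFamily_rRatio_le {m : ℕ} [NeZero m] (hodd : ∃ k, Odd k ∧ 1 < k ∧ k ∣ m) :
    ∃ e : Fin m → E2, IsEdgeFamily e ∧ rRatio e ≤ 1 / Real.sin (π / (2 * m)) / (2 * m) := by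
  obtain ⟨ε, hε, hsum⟩ := exists_signs_sum_smul_harmonicFrame_eq_zero hodd
  refine ⟨_, isEdgeFamily_smul_harmonicFrame hε hsum, ?_⟩
  have hperimeter : ∑ j, ‖ε j • harmonicFrame m j‖ = m := by
    have hnorm (j) : ‖harmonicFrame m j‖ = 1 := norm_dir _
    simp [norm_smul, hε, hnorm]
  rw [rRatio, hperimeter]
  gcongr
  exact zonotopeRadius_smul_harmonicFrame_le hε

end Comparison

lemma IsEdgeFamily.sum_norm_pos {m : ℕ} [NeZero m] {e : Fin m → E2} (he : IsEdgeFamily e) :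
    0 < ∑ j, ‖e j‖ :=
  Finset.sum_pos (fun j _ => norm_pos_iff.2 (he.1 j)) Finset.univ_nonempty

lemma IsOptimalEdgeFamily.zonotopeRadius_mul_le_sum_norm {m : ℕ} [NeZero m]
    (hodd : ∃ k, Odd k ∧ 1 < k ∧ k ∣ m) {e : Fin m → E2} (he : IsOptimalEdgeFamily e) :
    zonotopeRadius e * (m * Real.sin (π / (2 * m))) ≤ ∑ j, ‖e j‖ := by
  obtain ⟨e', he', hr'⟩ := exists_isEdgeFamily_rRatio_le hodd
  have hm : (0 : ℝ) < m := by exact_mod_cast NeZero.pos m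
  have hsin := sin_pi_div_two_mul_pos m
  have hpos := he.1.sum_norm_pos
  have hr : zonotopeRadius e / (2 * ∑ j, ‖e j‖) ≤ 1 / Real.sin (π / (2 * m)) / (2 * m) :=
    (he.2 e' he').trans hr'
  rw [div_div, div_le_div_iff₀ (by positivity) (by positivity)] at hr
  linarith

/-- If `m ≥ 3` has an odd factor, then every optimal edge family is, up to
a common positive scaling `c`, a common rotation `φ`, and a permutation `σ`, of the form
`e_{σ(j)} = c·ε_j·(cos(φ + jπ/m), sin(φ + jπ/m))` for signs `ε ∈ {±1}^m` with
`∑ ε_j e^{ijπ/m} = 0`; in particular it is equilateral. -/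
theorem stmt13 {m : ℕ} (hm : 3 ≤ m) (hodd : ∃ k, Odd k ∧ 1 < k ∧ k ∣ m)
    (e : Fin m → E2) (hopt : IsOptimalEdgeFamily e) :
    (∃ c : ℝ, 0 < c ∧ ∃ φ : ℝ, ∃ σ : Equiv.Perm (Fin m), ∃ ε : Fin m → ℝ,
      (∀ j, ε j = 1 ∨ ε j = -1) ∧
      (∑ j : Fin m, (ε j : ℂ) * Complex.exp (π * Complex.I / m) ^ ((j : ℕ) + 1) = 0) ∧
      ∀ j : Fin m, e (σ j) = (c * ε j) • vec2 (Real.cos (φ + ((j : ℕ) + 1) * π / m))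
        (Real.sin (φ + ((j : ℕ) + 1) * π / m))) ∧
    ∀ i j : Fin m, ‖e i‖ = ‖e j‖ := by
  have : NeZero m := ⟨by omega⟩
  have hne : e ≠ 0 := fun h => hopt.1.1 0 (congrFun h 0)
  obtain ⟨c, hc, φ, σ, ε, hε, he⟩ := exists_perm_sign_smul_dir_of_le_sum_norm hne
    (hopt.zonotopeRadius_mul_le_sum_norm hodd)
  refine ⟨⟨c, hc, φ, σ, ε, hε, ?_, he⟩, ?_⟩
  · have hsum : c • ∑ j : Fin m, ε j • dir (φ + ((j : ℕ) + 1) * π / m) = 0 := by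
      simp only [Finset.smul_sum, smul_smul, ← he]
      rw [Equiv.sum_comp σ e, hopt.1.2.2]
    have hsum := sum_smul_dir_add_eq_zero_iff.1 ((smul_eq_zero_iff_right hc.ne').1 hsum)
    simpa only [exp_pi_mul_I_div_pow, Nat.cast_add_one] using hsum
  · have hnorm (j) : ‖e (σ j)‖ = c := by
      rw [he, norm_smul, norm_dir, mul_one, Real.norm_eq_abs, abs_mul, abs_of_pos hc]
      rcases hε j with h | h <;> simp [h]
    intro i j
    rw [← σ.apply_symm_apply i, ← σ.apply_symm_apply j, hnorm, hnorm]
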